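/- Let Γ be a distance-regular digraph. Then for every vertex x ∈ X the in-distance partition {Γ_0←(x), Γ_1←(x), …, Γ_D←(x)} of X is equitable, i.e. there exist integers e→_{ij}(x) and e←_{ij}(x) (0 ≤ i,j ≤ D) such that for every y ∈ Γ_i←(x): |Γ_1→(y) ∩ Γ_j←(x)| = e→_{ij}(x) and |Γ_1←(y) ∩ Γ_j←(x)| = e←_{ij}(x). Moreover, the two partitions coincide as families of sets: {Γ_0→(x), …, Γ_D→(x)} = {Γ_0←(x), …, Γ_D←(x)}, i.e. there is a permutation σ of {0,…,D} with Γ_ℓ←(x) = Γ_{σ(ℓ)}→(x) for all ℓ. -/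

import Mathlib

/-!
The distance `∂(z,x)` is a function of the distance `∂(x,z)`. Indeed `(A ^ n) z x` depends only on
`n` and `∂(x,z)`, by induction on `n`: expanding `(A ^ (n+1)) z x` along the out-neighbours `w` of
`z` and grouping them by the value of `∂(x,w)`, each group has `d→_{ij}` elements with
`i = ∂(x,z)` (`pow_apply_eq_of_gdist`). Since `∂(z,x)` is read off from the numbers `(A ^ n) z x`,
there is a map `f` with `∂(z,x) = f (∂(x,z))` for all `x, z`; it is an involution on the distances
that occur (`exists_reversal`). Hence the in-distance partition around any vertex is
the out-distance partition with the indices permuted by `f`, and it inherits equitability.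
-/

open Matrix Polynomial BigOperators
open scoped Classical

/-- Distance from `x` to `y` in the digraph with adjacency matrix `A`:
the least `n` with `(A ^ n) x y ≠ 0`. -/
noncomputable def gdist {X : Type*} [Fintype X] (A : Matrix X X ℂ) (x y : X) : ℕ :=
  sInf {n : ℕ | (A ^ n) x y ≠ 0}

/-- Diameter of the digraph with adjacency matrix `A`. -/
noncomputable def gdiam {X : Type*} [Fintype X] (A : Matrix X X ℂ) : ℕ :=
  Finset.univ.sup fun p : X × X => gdist A p.1 p.2

/-- The distance-`i` matrix of the digraph with adjacency matrix `A`. -/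
noncomputable def dmat {X : Type*} [Fintype X] (A : Matrix X X ℂ) (i : ℕ) : Matrix X X ℂ :=
  fun x y => if gdist A x y = i then 1 else 0

/-- `Γ = Γ(A)` is a distance-regular digraph: the out-distance partition around every
vertex is equitable with parameters independent of the vertex. -/
def IsDRD {X : Type*} [Fintype X] (A : Matrix X X ℂ) (D : ℕ) : Prop :=
  ∃ dOut dIn : ℕ → ℕ → ℕ, ∀ x : X, ∀ i, i ≤ D → ∀ j, j ≤ D → ∀ y : X, gdist A x y = i →
    (Finset.univ.filter fun z : X => gdist A y z = 1 ∧ gdist A x z = j).card = dOut i j ∧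
    (Finset.univ.filter fun z : X => gdist A z y = 1 ∧ gdist A x z = j).card = dIn i j

lemma gdist_le_gdiam {X : Type*} [Fintype X] (A : Matrix X X ℂ) (x y : X) :
    gdist A x y ≤ gdiam A :=
  Finset.le_sup (f := fun p : X × X => gdist A p.1 p.2) (Finset.mem_univ (x, y))

lemma gdist_eq_zero_iff {X : Type*} [Fintype X] (A : Matrix X X ℂ)
    (hconn : ∀ x y : X, ∃ n : ℕ, (A ^ n) x y ≠ 0) (x y : X) : gdist A x y = 0 ↔ x = y := by
  have hne : {n : ℕ | (A ^ n) x y ≠ 0} ≠ ∅ := Set.Nonempty.ne_empty (hconn x y)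
  rw [gdist, Nat.sInf_eq_zero, or_iff_left hne]
  simp [Matrix.one_apply]

lemma apply_eq_ite_gdist {X : Type*} [Fintype X] (A : Matrix X X ℂ)
    (h01 : ∀ x y : X, A x y = 0 ∨ A x y = 1) (hdiag : ∀ x : X, A x x = 0)
    (hconn : ∀ x y : X, ∃ n : ℕ, (A ^ n) x y ≠ 0) (x y : X) :
    A x y = if gdist A x y = 1 then 1 else 0 := by
  split_ifs with h
  · have hmem : gdist A x y ∈ {n : ℕ | (A ^ n) x y ≠ 0} := Nat.sInf_mem (hconn x y)
    rw [h] at hmem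
    exact (h01 x y).resolve_left (by simpa using hmem)
  · by_contra hA
    apply h
    have hle : gdist A x y ≤ 1 := Nat.sInf_le (by simpa using hA)
    have h0 : gdist A x y ≠ 0 := by
      rw [Ne, gdist_eq_zero_iff A hconn]
      rintro rfl
      exact hA (hdiag x)
    omega

/-- The number `(A ^ n) z x` of walks of length `n` from `z` to `x` depends only on the distance
in the opposite direction, `∂(x,z)`. -/
lemma pow_apply_eq_of_gdist {X : Type*} [Fintype X] (A : Matrix X X ℂ)
    (h01 : ∀ x y : X, A x y = 0 ∨ A x y = 1) (hdiag : ∀ x : X, A x x = 0)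
    (hconn : ∀ x y : X, ∃ n : ℕ, (A ^ n) x y ≠ 0) (hdrd : IsDRD A (gdiam A)) (n : ℕ) :
    ∃ c : ℕ → ℂ, ∀ x z : X, (A ^ n) z x = c (gdist A x z) := by
  obtain ⟨dOut, dIn, hd⟩ := hdrd
  induction n with
  | zero =>
    refine ⟨fun i => if i = 0 then 1 else 0, fun x z => ?_⟩
    simp [Matrix.one_apply, gdist_eq_zero_iff A hconn, eq_comm]
  | succ n ih =>
    obtain ⟨c, hc⟩ := ih
    refine ⟨fun i => ∑ j ∈ Finset.range (gdiam A + 1), (dOut i j : ℂ) * c j, fun x z => ?_⟩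
    have hterm : ∀ w, A z w * (A ^ n) w x = ∑ j ∈ Finset.range (gdiam A + 1),
        if gdist A z w = 1 ∧ gdist A x w = j then c j else 0 := by
      intro w
      have hlt := Nat.lt_succ_of_le (gdist_le_gdiam A x w)
      rw [apply_eq_ite_gdist A h01 hdiag hconn z w, hc]
      by_cases h : gdist A z w = 1 <;> simp [h, hlt]
    rw [pow_succ', Matrix.mul_apply, Finset.sum_congr rfl fun w _ => hterm w, Finset.sum_comm]
    refine Finset.sum_congr rfl fun j hj => ?_
    rw [← (hd x _ (gdist_le_gdiam A x z) j (Nat.lt_succ_iff.1 (Finset.mem_range.1 hj)) z rfl).1,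
      ← Finset.sum_filter, Finset.sum_const, nsmul_eq_mul]

/-- Reversing a pair of vertices acts on distances through an involution `f` of `ℕ` preserving
`{0, …, D}`; on a value that is not a distance, `f` is taken to be the identity. -/
lemma exists_reversal {X : Type*} [Fintype X] (A : Matrix X X ℂ)
    (h01 : ∀ x y : X, A x y = 0 ∨ A x y = 1) (hdiag : ∀ x : X, A x x = 0)
    (hconn : ∀ x y : X, ∃ n : ℕ, (A ^ n) x y ≠ 0) (hdrd : IsDRD A (gdiam A)) :
    ∃ f : ℕ → ℕ, (∀ x z : X, gdist A z x = f (gdist A x z)) ∧ Function.Involutive f ∧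
      ∀ i ≤ gdiam A, f i ≤ gdiam A := by
  choose c hc using pow_apply_eq_of_gdist A h01 hdiag hconn hdrd
  let f : ℕ → ℕ := fun i =>
    if ∃ x z : X, gdist A x z = i then sInf {n : ℕ | c n i ≠ 0} else i
  have hf : ∀ x z : X, gdist A z x = f (gdist A x z) := by
    intro x z
    have hex : ∃ x' z' : X, gdist A x' z' = gdist A x z := ⟨x, z, rfl⟩
    simp only [f, if_pos hex, ← hc]
    rfl
  refine ⟨f, hf, fun i => ?_, fun i hi => ?_⟩
  · by_cases h : ∃ x z : X, gdist A x z = i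
    · obtain ⟨x, z, rfl⟩ := h
      rw [← hf, ← hf]
    · have hi : f i = i := if_neg h
      rw [hi, hi]
  · by_cases h : ∃ x z : X, gdist A x z = i
    · obtain ⟨x, z, rfl⟩ := h
      rw [← hf]
      exact gdist_le_gdiam A z x
    · have hfi : f i = i := if_neg h
      rwa [hfi]

/-- In a distance-regular digraph, for every vertex `x` the in-distance partition
`{Γ_0←(x), …, Γ_D←(x)}` is equitable, and it coincides with the out-distance
partition as a family of sets. -/
theorem stmt7 {X : Type*} [Fintype X] [DecidableEq X] [Nonempty X] (A : Matrix X X ℂ)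
    (h01 : ∀ x y : X, A x y = 0 ∨ A x y = 1)
    (hdiag : ∀ x : X, A x x = 0)
    (hconn : ∀ x y : X, ∃ n : ℕ, (A ^ n) x y ≠ 0)
    (D : ℕ) (hD : D = gdiam A)
    (hdrd : IsDRD A D) (x : X) :
    (∃ eOut eIn : ℕ → ℕ → ℕ, ∀ i, i ≤ D → ∀ j, j ≤ D → ∀ y : X, gdist A y x = i →
      (Finset.univ.filter fun z : X => gdist A y z = 1 ∧ gdist A z x = j).card = eOut i j ∧
      (Finset.univ.filter fun z : X => gdist A z y = 1 ∧ gdist A z x = j).card = eIn i j) ∧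
    ∃ σ : Equiv.Perm (Fin (D + 1)), ∀ ℓ : Fin (D + 1),
      {z : X | gdist A z x = (ℓ : ℕ)} = {z : X | gdist A x z = ((σ ℓ : Fin (D + 1)) : ℕ)} := by
  subst hD
  -- `gdist` is defined with the classical decidable equality on `X`, `hconn` with the given one;
  -- `convert` identifies the two.
  obtain ⟨f, hf, hinv, hle⟩ := exists_reversal A h01 hdiag (by convert hconn) hdrd
  have hiff : ∀ (z : X) (j : ℕ), gdist A z x = j ↔ gdist A x z = f j := by
    intro z j
    rw [hf x z]
    exact hinv.eq_iff
  constructor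
  · obtain ⟨dOut, dIn, hd⟩ := hdrd
    refine ⟨fun i j => dOut (f i) (f j), fun i j => dIn (f i) (f j), fun i hi j hj y hy => ?_⟩
    simp only [hiff]
    exact hd x (f i) (hle i hi) (f j) (hle j hj) y ((hiff y i).1 hy)
  · let g : Fin (gdiam A + 1) → Fin (gdiam A + 1) := fun ℓ =>
      ⟨f ℓ, Nat.lt_succ_of_le (hle ℓ (Nat.le_of_lt_succ ℓ.2))⟩
    have hg : Function.Involutive g := fun ℓ => Fin.ext (hinv ℓ)
    refine ⟨hg.toPerm, fun ℓ => ?_⟩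
    ext z
    exact hiff z ℓ
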